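/- For all integers b ≥ 2, 0 ≤ d < b and k ≥ 0, the first moment of the Irwin measure satisfies the exact formula u_{k;1}(b,d) = b/2 − b(2d+1)/(2(b² − b + 1)^{k+1}). -/

import Mathlib

open Filter Asymptotics

/-- The `m`-th moment of the Irwin measure:
`u_{k;m}(b,d) = ∑_{l≥0} b^{-l(m+1)} ∑_{n=0}^{b^l-1} [n has exactly k base-b digits d
(padded to length l)] · n^m`. -/
noncomputable def momentU (b d k m : ℕ) : ℝ :=
  ∑' l : ℕ, ((b : ℝ) ^ (l * (m + 1)))⁻¹ *
    ∑ n ∈ Finset.range (b ^ l),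
      (if ((Finset.range l).filter fun i => n / b ^ i % b = d).card = k
        then (n : ℝ) ^ m else 0)

/-!
The moments `u_{k;m}` are those of the measure `μ_k = ∑_l ∑_n b^{-l} δ_{n / b^l}`, where `n` runs
over the `l`-digit strings with exactly `k` digits `d`. Removing the leading digit `a` of a string
sends the atom at `(a + x) / b` to the atom at `x`, and makes `μ_k` self-similar:
`b ∫ f dμ_k = ∑_{a ≠ d} ∫ f((a + x) / b) dμ_k + ∫ f((d + x) / b) dμ_{k-1}`,
with `b f(0)` in place of the last term when `k = 0`. Every `μ_k` has mass `b`, so for `f(x) = x`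
this is a linear recurrence in `k`, in which `u_{k;1} - b / 2` is divided by `b² - b + 1`
at each step.
-/

namespace Irwin

open Finset

lemma sum_range_mul {M : Type*} [AddCommMonoid M] (f : ℕ → M) (c N : ℕ) :
    ∑ n ∈ range (c * N), f n = ∑ a ∈ range c, ∑ r ∈ range N, f (a * N + r) := by
  induction c with
  | zero => simp
  | succ c ih => rw [Nat.succ_mul, sum_range_add, ih, sum_range_succ]

/-- The number of digits `d` of `n`, padded with leading zeros to an `l`-digit string in base `b`
(or truncated to its `l` lowest digits). -/
def digitCount (b d l n : ℕ) : ℕ := #{i ∈ range l | n / b ^ i % b = d}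

lemma digitCount_mul_pow_add {b d l a r : ℕ} (ha : a < b) (hr : r < b ^ l) :
    digitCount b d (l + 1) (a * b ^ l + r) = digitCount b d l r + if a = d then 1 else 0 := by
  have lower_digit : ∀ i ∈ range l, (a * b ^ l + r) / b ^ i % b = r / b ^ i % b := by
    intro i hi
    obtain ⟨j, rfl⟩ := Nat.exists_eq_add_of_lt (mem_range.1 hi)
    have hshift : a * b ^ (i + j + 1) + r = b ^ i * (b * (a * b ^ j)) + r := by ring
    rw [hshift, Nat.mul_add_div (pow_pos (by lia) i), Nat.mul_add_mod]
  have leading_digit : (a * b ^ l + r) / b ^ l % b = a := by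
    rw [mul_comm, Nat.mul_add_div (pow_pos (by lia) l), Nat.div_eq_of_lt hr, add_zero,
      Nat.mod_eq_of_lt ha]
  simp only [digitCount, card_filter]
  rw [sum_range_succ, leading_digit]
  congr 1
  exact sum_congr rfl fun i hi ↦ by rw [lower_digit i hi]

/-- The `l`-digit strings in base `b` with exactly `k` digits `d`, as integers `n < b ^ l`. -/
def digitLevel (b d k l : ℕ) : Finset ℕ := {n ∈ range (b ^ l) | digitCount b d l n = k}

lemma digitLevel_zero_zero (b d : ℕ) : digitLevel b d 0 0 = {0} := by
  simp [digitLevel, digitCount]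

lemma digitLevel_succ_zero (b d k : ℕ) : digitLevel b d (k + 1) 0 = ∅ := by
  simp [digitLevel, digitCount]

section Strings

variable {M : Type*} [AddCommMonoid M] {b d : ℕ}

lemma sum_digitLevel_succ (hd : d < b) (k l : ℕ) (f : ℕ → M) :
    ∑ n ∈ digitLevel b d k (l + 1), f n =
      ∑ a ∈ (range b).erase d, ∑ r ∈ digitLevel b d k l, f (a * b ^ l + r) +
        ∑ r ∈ range (b ^ l) with digitCount b d l r + 1 = k, f (d * b ^ l + r) := by
  simp only [digitLevel, sum_filter]
  rw [pow_succ', sum_range_mul, ← sum_erase_add _ _ (mem_range.2 hd)]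
  congr 1
  · refine sum_congr rfl fun a ha ↦ sum_congr rfl fun r hr ↦ ?_
    obtain ⟨had, hab⟩ := mem_erase.1 ha
    rw [digitCount_mul_pow_add (mem_range.1 hab) (mem_range.1 hr), if_neg had, add_zero]
  · refine sum_congr rfl fun r hr ↦ ?_
    rw [digitCount_mul_pow_add hd (mem_range.1 hr), if_pos rfl]

lemma sum_digitLevel_zero_succ (hd : d < b) (l : ℕ) (f : ℕ → M) :
    ∑ n ∈ digitLevel b d 0 (l + 1), f n =
      ∑ a ∈ (range b).erase d, ∑ r ∈ digitLevel b d 0 l, f (a * b ^ l + r) := by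
  simp [sum_digitLevel_succ hd]

lemma sum_digitLevel_succ_succ (hd : d < b) (k l : ℕ) (f : ℕ → M) :
    ∑ n ∈ digitLevel b d (k + 1) (l + 1), f n =
      ∑ a ∈ (range b).erase d, ∑ r ∈ digitLevel b d (k + 1) l, f (a * b ^ l + r) +
        ∑ r ∈ digitLevel b d k l, f (d * b ^ l + r) := by
  rw [sum_digitLevel_succ hd]
  simp only [digitLevel, add_left_inj]

lemma card_digitLevel (hd : d < b) (k l : ℕ) :
    #(digitLevel b d k l) = l.choose k * (b - 1) ^ (l - k) := by
  have card_digits : #((range b).erase d) = b - 1 := by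
    rw [card_erase_of_mem (mem_range.2 hd), card_range]
  induction l generalizing k with
  | zero =>
    cases k with
    | zero => simp [digitLevel_zero_zero]
    | succ k => simp [digitLevel_succ_zero]
  | succ l ih =>
    rw [card_eq_sum_ones]
    cases k with
    | zero =>
      simp only [sum_digitLevel_zero_succ hd, sum_const, ih, card_digits,
        smul_eq_mul, Nat.choose_zero_right, Nat.sub_zero]
      ring
    | succ k =>
      simp only [sum_digitLevel_succ_succ hd, sum_const, ih, card_digits,
        smul_eq_mul, Nat.choose_succ_succ, Nat.succ_sub_succ]
      rcases le_or_gt l k with hlk | hkl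
      · simp [Nat.choose_eq_zero_of_lt (Nat.lt_succ_of_le hlk)]
      · rw [← Nat.sub_add_cancel (Nat.sub_pos_of_lt hkl), Nat.sub_sub, pow_succ]
        ring

end Strings

/-- The integral of `f` against the part of the Irwin measure carried by strings of length `l`: the
string `n` with exactly `k` digits `d` is a point mass `b⁻ˡ` at `n / bˡ`. -/
noncomputable def levelIntegral (b d k l : ℕ) (f : ℝ → ℝ) : ℝ :=
  ((b : ℝ) ^ l)⁻¹ * ∑ n ∈ digitLevel b d k l, f (n / (b : ℝ) ^ l)

/-- The integral of `f` against the Irwin measure of the strings with exactly `k` digits `d`,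
with the junk value `0` if the integrals over the levels are not summable. -/
noncomputable def irwinIntegral (b d k : ℕ) (f : ℝ → ℝ) : ℝ := ∑' l, levelIntegral b d k l f

lemma momentU_eq_irwinIntegral (b d k m : ℕ) :
    momentU b d k m = irwinIntegral b d k (· ^ m) := by
  refine tsum_congr fun l ↦ ?_
  rw [levelIntegral, digitLevel, sum_filter, mul_sum, mul_sum]
  refine sum_congr rfl fun n _ ↦ ?_
  rw [digitCount, div_pow]
  split_ifs <;> ring

lemma levelIntegral_zero_zero (b d : ℕ) (f : ℝ → ℝ) : levelIntegral b d 0 0 f = f 0 := by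
  simp [levelIntegral, digitLevel_zero_zero]

lemma levelIntegral_succ_zero (b d k : ℕ) (f : ℝ → ℝ) : levelIntegral b d (k + 1) 0 f = 0 := by
  simp [levelIntegral, digitLevel_succ_zero]

lemma levelIntegral_affine (b d k l : ℕ) (a c : ℝ) :
    levelIntegral b d k l (fun x ↦ (a + x) / c) =
      (a * levelIntegral b d k l 1 + levelIntegral b d k l id) / c := by
  simp only [levelIntegral, ← sum_div, sum_add_distrib, sum_const, nsmul_eq_mul, id,
    Pi.one_apply]
  ring

section SelfSimilarity

variable {b d : ℕ}

lemma add_mul_pow_div_pow_succ (hb : b ≠ 0) (a r l : ℕ) :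
    ((a * b ^ l + r : ℕ) : ℝ) / (b : ℝ) ^ (l + 1) = (a + r / (b : ℝ) ^ l) / b := by
  push_cast
  field_simp
  ring

lemma mul_inv_pow_succ (hb : b ≠ 0) (l : ℕ) :
    (b : ℝ) * ((b : ℝ) ^ (l + 1))⁻¹ = ((b : ℝ) ^ l)⁻¹ := by
  rw [pow_succ', mul_inv, mul_inv_cancel_left₀ (by exact_mod_cast hb)]

lemma mul_levelIntegral_zero_succ (hd : d < b) (l : ℕ) (f : ℝ → ℝ) :
    b * levelIntegral b d 0 (l + 1) f =
      ∑ a ∈ (range b).erase d, levelIntegral b d 0 l (fun x ↦ f ((a + x) / b)) := by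
  have hb : b ≠ 0 := Nat.ne_zero_of_lt hd
  simp only [levelIntegral, sum_digitLevel_zero_succ hd, add_mul_pow_div_pow_succ hb, ← mul_sum,
    ← mul_assoc, mul_inv_pow_succ hb]

lemma mul_levelIntegral_succ_succ (hd : d < b) (k l : ℕ) (f : ℝ → ℝ) :
    b * levelIntegral b d (k + 1) (l + 1) f =
      ∑ a ∈ (range b).erase d, levelIntegral b d (k + 1) l (fun x ↦ f ((a + x) / b)) +
        levelIntegral b d k l (fun x ↦ f ((d + x) / b)) := by
  have hb : b ≠ 0 := Nat.ne_zero_of_lt hd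
  simp only [levelIntegral, sum_digitLevel_succ_succ hd, add_mul_pow_div_pow_succ hb, ← mul_sum,
    ← mul_add, ← mul_assoc, mul_inv_pow_succ hb]

lemma hasSum_levelIntegral_one (hd : d < b) (k : ℕ) :
    HasSum (fun l ↦ levelIntegral b d k l 1) b := by
  have hb : (0 : ℝ) < b := by exact_mod_cast Nat.zero_lt_of_lt hd
  have hb1 : (1 : ℝ) ≤ b := by exact_mod_cast Nat.one_le_of_lt hd
  have level_mass (l : ℕ) : levelIntegral b d k l 1 =
      ((b : ℝ) ^ l)⁻¹ * (l.choose k * ((b : ℝ) - 1) ^ (l - k)) := by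
    simp [levelIntegral, card_digitLevel hd, Nat.cast_pred (Nat.zero_lt_of_lt hd)]
  have hratio : ‖((b : ℝ) - 1) / b‖ < 1 := by
    rw [Real.norm_of_nonneg (div_nonneg (by linarith) hb.le), div_lt_one hb]
    linarith
  have short_strings : ∀ l ∉ Set.range (· + k), levelIntegral b d k l 1 = 0 := by
    intro l hl
    have hlk : l < k := by
      by_contra! hkl
      exact hl ⟨l - k, Nat.sub_add_cancel hkl⟩
    simp [level_mass, Nat.choose_eq_zero_of_lt hlk]
  rw [← (add_left_injective k).hasSum_iff short_strings]
  convert! (hasSum_choose_mul_geometric_of_norm_lt_one k hratio).mul_left ((b : ℝ) ^ k)⁻¹ using 1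
  · ext j
    simp only [Function.comp_apply, level_mass, Nat.add_sub_cancel, div_pow, pow_add]
    ring
  · have : 1 - ((b : ℝ) - 1) / b = (b : ℝ)⁻¹ := by field_simp; ring
    rw [this, inv_pow, one_div, inv_inv, pow_succ, inv_mul_cancel_left₀ (by positivity)]

lemma summable_levelIntegral (hd : d < b) (k : ℕ) {f : ℝ → ℝ} {C : ℝ}
    (hf : ∀ x ∈ Set.Ico (0 : ℝ) 1, |f x| ≤ C) :
    Summable fun l ↦ levelIntegral b d k l f := by
  have hb : (0 : ℝ) < b := by exact_mod_cast Nat.zero_lt_of_lt hd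
  refine ((hasSum_levelIntegral_one hd k).summable.mul_left C).of_norm_bounded fun l ↦ ?_
  have hpoint : ∀ n ∈ digitLevel b d k l, |f (n / (b : ℝ) ^ l)| ≤ C := by
    intro n hn
    have hlt : (n : ℝ) < (b : ℝ) ^ l := by
      exact_mod_cast mem_range.1 (mem_filter.1 hn).1
    exact hf _ ⟨by positivity, (div_lt_one (by positivity)).2 hlt⟩
  calc ‖levelIntegral b d k l f‖
      = ((b : ℝ) ^ l)⁻¹ * |∑ n ∈ digitLevel b d k l, f (n / (b : ℝ) ^ l)| := by
        rw [levelIntegral, norm_mul, Real.norm_of_nonneg (by positivity), Real.norm_eq_abs]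
    _ ≤ ((b : ℝ) ^ l)⁻¹ * ∑ _ ∈ digitLevel b d k l, C := by
        gcongr
        exact (abs_sum_le_sum_abs _ _).trans (sum_le_sum hpoint)
    _ = C * levelIntegral b d k l 1 := by
        simp only [levelIntegral, sum_const, nsmul_eq_mul, Pi.one_apply]
        ring

lemma add_div_mem_Ico {a : ℕ} (ha : a < b) {x : ℝ} (hx : x ∈ Set.Ico (0 : ℝ) 1) :
    (a + x) / b ∈ Set.Ico (0 : ℝ) 1 := by
  have hab : (a : ℝ) + 1 ≤ b := by exact_mod_cast ha
  have hb : (0 : ℝ) < b := by exact_mod_cast Nat.zero_lt_of_lt ha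
  have := hx.1
  exact ⟨by positivity, (div_lt_one hb).2 (by linarith [hx.2])⟩

lemma summable_levelIntegral_comp (hd : d < b) (k : ℕ) {f : ℝ → ℝ} {C : ℝ}
    (hf : ∀ x ∈ Set.Ico (0 : ℝ) 1, |f x| ≤ C) {a : ℕ} (ha : a < b) :
    Summable fun l ↦ levelIntegral b d k l (fun x ↦ f ((a + x) / b)) :=
  summable_levelIntegral hd k fun _ hx ↦ hf _ (add_div_mem_Ico ha hx)

theorem mul_irwinIntegral_zero (hd : d < b) {f : ℝ → ℝ} {C : ℝ}
    (hf : ∀ x ∈ Set.Ico (0 : ℝ) 1, |f x| ≤ C) :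
    b * irwinIntegral b d 0 f =
      b * f 0 + ∑ a ∈ (range b).erase d, irwinIntegral b d 0 (fun x ↦ f ((a + x) / b)) := by
  have hcomp : ∀ a ∈ (range b).erase d,
      Summable fun l ↦ levelIntegral b d 0 l (fun x ↦ f ((a + x) / b)) := fun a ha ↦
    summable_levelIntegral_comp hd 0 hf (mem_range.1 (mem_of_mem_erase ha))
  simp only [irwinIntegral]
  rw [(summable_levelIntegral hd 0 hf).tsum_eq_zero_add, levelIntegral_zero_zero, mul_add,
    ← tsum_mul_left, ← Summable.tsum_finsetSum hcomp]
  simp only [mul_levelIntegral_zero_succ hd]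

theorem mul_irwinIntegral_succ (hd : d < b) (k : ℕ) {f : ℝ → ℝ} {C : ℝ}
    (hf : ∀ x ∈ Set.Ico (0 : ℝ) 1, |f x| ≤ C) :
    b * irwinIntegral b d (k + 1) f =
      ∑ a ∈ (range b).erase d, irwinIntegral b d (k + 1) (fun x ↦ f ((a + x) / b)) +
        irwinIntegral b d k (fun x ↦ f ((d + x) / b)) := by
  have hcomp : ∀ a ∈ (range b).erase d,
      Summable fun l ↦ levelIntegral b d (k + 1) l (fun x ↦ f ((a + x) / b)) := fun a ha ↦
    summable_levelIntegral_comp hd (k + 1) hf (mem_range.1 (mem_of_mem_erase ha))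
  simp only [irwinIntegral]
  rw [(summable_levelIntegral hd (k + 1) hf).tsum_eq_zero_add, levelIntegral_succ_zero, zero_add,
    ← tsum_mul_left, ← Summable.tsum_finsetSum hcomp,
    ← (summable_sum hcomp).tsum_add (summable_levelIntegral_comp hd k hf hd)]
  simp only [mul_levelIntegral_succ_succ hd]

end SelfSimilarity

section FirstMoment

variable {b d : ℕ}

lemma abs_id_le_one_of_mem_Ico {x : ℝ} (hx : x ∈ Set.Ico (0 : ℝ) 1) : |id x| ≤ 1 :=
  abs_le.2 ⟨by simp only [id]; linarith [hx.1], hx.2.le⟩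

lemma irwinIntegral_affine (hd : d < b) (k : ℕ) (a c : ℝ) :
    irwinIntegral b d k (fun x ↦ (a + x) / c) = (a * b + irwinIntegral b d k id) / c := by
  have hid := (summable_levelIntegral hd k fun _ ↦ abs_id_le_one_of_mem_Ico).hasSum
  simpa only [irwinIntegral, levelIntegral_affine] using
    ((((hasSum_levelIntegral_one hd k).mul_left a).add hid).div_const c).tsum_eq

lemma sum_erase_irwinIntegral_affine (hd : d < b) (k : ℕ) :
    ∑ a ∈ (range b).erase d, irwinIntegral b d k (fun x ↦ (a + x) / b) =
      b * (b - 1) / 2 - d + (b - 1) * irwinIntegral b d k id / b := by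
  have hb : (b : ℝ) ≠ 0 := by exact_mod_cast Nat.ne_zero_of_lt hd
  have gauss : ∑ a ∈ range b, (a : ℝ) = b * (b - 1) / 2 := by
    have := congrArg (Nat.cast (R := ℝ)) (sum_range_id_mul_two b)
    push_cast [Nat.cast_pred (Nat.zero_lt_of_lt hd)] at this
    linarith
  simp only [irwinIntegral_affine hd, sum_erase_eq_sub (mem_range.2 hd), ← sum_div,
    sum_add_distrib, ← sum_mul, gauss, sum_const, card_range, nsmul_eq_mul]
  field_simp
  ring

lemma mul_irwinIntegral_zero_id (hd : d < b) :
    ((b : ℝ) ^ 2 - b + 1) * irwinIntegral b d 0 id = b ^ 2 * (b - 1) / 2 - b * d := by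
  have hb : (b : ℝ) ≠ 0 := by exact_mod_cast Nat.ne_zero_of_lt hd
  have self_similar := mul_irwinIntegral_zero hd fun _ ↦ abs_id_le_one_of_mem_Ico
  simp only [id_eq] at self_similar
  rw [sum_erase_irwinIntegral_affine hd] at self_similar
  field_simp at self_similar
  linarith

lemma mul_irwinIntegral_succ_id (hd : d < b) (k : ℕ) :
    ((b : ℝ) ^ 2 - b + 1) * irwinIntegral b d (k + 1) id =
      b ^ 2 * (b - 1) / 2 + irwinIntegral b d k id := by
  have hb : (b : ℝ) ≠ 0 := by exact_mod_cast Nat.ne_zero_of_lt hd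
  have self_similar := mul_irwinIntegral_succ hd k fun _ ↦ abs_id_le_one_of_mem_Ico
  simp only [id_eq] at self_similar
  rw [sum_erase_irwinIntegral_affine hd, irwinIntegral_affine hd] at self_similar
  field_simp at self_similar
  linarith

lemma pow_mul_irwinIntegral_id_sub (hd : d < b) (k : ℕ) :
    ((b : ℝ) ^ 2 - b + 1) ^ (k + 1) * (irwinIntegral b d k id - b / 2) =
      -(b * (2 * d + 1) / 2) := by
  induction k with
  | zero => linear_combination mul_irwinIntegral_zero_id hd
  | succ k ih =>
    rw [← ih]
    linear_combination ((b : ℝ) ^ 2 - b + 1) ^ (k + 1) * mul_irwinIntegral_succ_id hd k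

end FirstMoment

end Irwin

theorem momentU_one_exact (b d k : ℕ) (hb : 2 ≤ b) (hd : d < b) :
    momentU b d k 1 = (b : ℝ) / 2
      - (b : ℝ) * (2 * (d : ℝ) + 1) / (2 * ((b : ℝ) ^ 2 - b + 1) ^ (k + 1)) := by
  have hD : (0 : ℝ) < (b : ℝ) ^ 2 - b + 1 := by nlinarith [sq_nonneg ((b : ℝ) - 1)]
  have hmoment : momentU b d k 1 = Irwin.irwinIntegral b d k id :=
    (Irwin.momentU_eq_irwinIntegral b d k 1).trans (congrArg _ (funext pow_one))
  rw [hmoment, eq_sub_iff_add_eq', ← eq_sub_iff_add_eq, div_eq_iff (by positivity)]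
  linear_combination 2 * Irwin.pow_mul_irwinIntegral_id_sub hd k
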